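/- Let G be a discrete group acting amenably by α on a unital C*-algebra A. Then A⋊_{α,r}G is nuclear if and only if A is nuclear. -/

import Mathlib

noncomputable section

open scoped ComplexOrder
open Matrix
open scoped ENNReal

/-- Positivity of a matrix over a (possibly non-unital) C*-algebra:
`M` is positive iff it factors as `Nᴴ * N`. -/
def MatPos {R : Type*} [NonUnitalSemiring R] [StarRing R] {ν : Type*} [Fintype ν]
    (M : Matrix ν ν R) : Prop :=
  ∃ N : Matrix ν ν R, M = Nᴴ * N

/-- A linear map between C*-algebras is completely positive if all its matrix
amplifications preserve positivity. -/
def IsCompletelyPositive {R S : Type*} [NonUnitalSemiring R] [StarRing R] [Module ℂ R]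
    [NonUnitalSemiring S] [StarRing S] [Module ℂ S] (Φ : R →ₗ[ℂ] S) : Prop :=
  ∀ (n : ℕ) (M : Matrix (Fin n) (Fin n) R), MatPos M → MatPos (M.map Φ)

variable {H : Type*} [NormedAddCommGroup H] [InnerProductSpace ℂ H] [CompleteSpace H]

/-- The bounded operator on the Hilbert space `H ⊕₂ ⋯ ⊕₂ H` associated to an
operator-valued `n × n` matrix. -/
def matOp {ν : Type*} [Fintype ν] (M : Matrix ν ν (H →L[ℂ] H)) :
    PiLp 2 (fun _ : ν => H) →L[ℂ] PiLp 2 (fun _ : ν => H) :=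
  ((PiLp.continuousLinearEquiv 2 ℂ (fun _ : ν => H)).symm :
      (∀ _ : ν, H) →L[ℂ] PiLp 2 (fun _ : ν => H)) ∘L
    (ContinuousLinearMap.pi fun i =>
      (∑ j, (M i j) ∘L (ContinuousLinearMap.proj j)) ∘L
        ((PiLp.continuousLinearEquiv 2 ℂ (fun _ : ν => H)) :
          PiLp 2 (fun _ : ν => H) →L[ℂ] ∀ _ : ν, H))

variable {H : Type*} [NormedAddCommGroup H] [InnerProductSpace ℂ H] [CompleteSpace H]
variable {X : Type*}

/-- Evaluation at a point, as a continuous linear map `ℓ²(X,H) → H`. -/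
def lpEval (x : X) : lp (fun _ : X => H) 2 →L[ℂ] H :=
  LinearMap.mkContinuous
    { toFun := fun f => f x
      map_add' := fun f g => by
        have := lp.coeFn_add f g
        exact congrFun this x
      map_smul' := fun c f => by
        have := lp.coeFn_smul c f
        exact congrFun this x }
    1 (fun f => by
      simpa using lp.norm_apply_le_norm (by norm_num) f x)

/-- Inclusion of the `x`-th coordinate, as a continuous linear map `H → ℓ²(X,H)`. -/
def lpSingle (x : X) : H →L[ℂ] lp (fun _ : X => H) 2 := by
  classical
  exact LinearMap.mkContinuous
    { toFun := fun ξ => lp.single 2 x ξ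
      map_add' := fun ξ η => by
        apply lp.ext
        funext j
        by_cases h : j = x
        · subst h; simp [lp.single_apply_self]
        · simp [lp.single_apply_ne _ _ _ h, lp.coeFn_add]
      map_smul' := fun c ξ => by simp [lp.single_smul] }
    1 (fun ξ => by
      simpa using (lp.norm_single (p := 2) (by norm_num)
        (fun _ : X => ξ) x).le)

/-- The elementary operator `e_{x,y} ⊗ T` on `ℓ²(X,H)`. -/
def elemOp (x y : X) (T : H →L[ℂ] H) :
    lp (fun _ : X => H) 2 →L[ℂ] lp (fun _ : X => H) 2 :=
  (lpSingle x) ∘L T ∘L (lpEval y)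

/-- The operator `T_k` on `ℓ²(X,H)` associated with a finitely supported kernel
`k : X × X → B(H)`; it is (defined to be) `0` if `k` is not finitely supported. -/
def TOp (k : X × X → (H →L[ℂ] H)) :
    lp (fun _ : X => H) 2 →L[ℂ] lp (fun _ : X => H) 2 :=
  ∑ᶠ (p : X × X), elemOp p.1 p.2 (k p)

variable {G : Type*} [Group G]

/-- The left regular translation `λ_t` on `ℓ²(G,H)`. -/
def lam (t : G) : lp (fun _ : G => H) 2 →L[ℂ] lp (fun _ : G => H) 2 :=
  LinearMap.mkContinuous
    { toFun := fun f =>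
        ⟨fun s => f (t⁻¹ * s), by
          apply memℓp_gen
          have hf : Summable fun s => ‖f s‖ ^ (2 : ℝ≥0∞).toReal :=
            (lp.memℓp f).summable (by norm_num)
          exact ((Equiv.mulLeft t⁻¹).summable_iff
            (f := fun s => ‖f s‖ ^ (2 : ℝ≥0∞).toReal)).2 hf⟩
      map_add' := fun f g => by
        apply lp.ext; funext s
        exact congrFun (lp.coeFn_add f g) (t⁻¹ * s)
      map_smul' := fun c f => by
        apply lp.ext; funext s
        exact congrFun (lp.coeFn_smul c f) (t⁻¹ * s) }
    1 (fun f => by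
      rw [one_mul]
      refine lp.norm_le_of_tsum_le (by norm_num) (norm_nonneg f) ?_
      have h1 : ∑' (s : G), ‖f (t⁻¹ * s)‖ ^ (2 : ℝ≥0∞).toReal
          = ∑' (s : G), ‖f s‖ ^ (2 : ℝ≥0∞).toReal :=
        (Equiv.mulLeft t⁻¹).tsum_eq (fun s => ‖f s‖ ^ (2 : ℝ≥0∞).toReal)
      show ∑' (s : G), ‖f (t⁻¹ * s)‖ ^ (2 : ℝ≥0∞).toReal ≤ ‖f‖ ^ (2 : ℝ≥0∞).toReal
      rw [h1, ← lp.norm_rpow_eq_tsum (by norm_num) f])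

/-- The diagonal ("block multiplication") operator on `ℓ²(X,H)` associated with a
uniformly bounded family of operators. -/
def diagOp (T : X → (H →L[ℂ] H)) (C : ℝ) (hC : ∀ x, ‖T x‖ ≤ C) :
    lp (fun _ : X => H) 2 →L[ℂ] lp (fun _ : X => H) 2 := by
  have hC' : ∀ x, ‖T x‖ ≤ max C 0 := fun x => (hC x).trans (le_max_left _ _)
  have hr : (0:ℝ) < (2 : ℝ≥0∞).toReal := by norm_num
  have key : ∀ (f : lp (fun _ : X => H) 2) (x : X),
      ‖T x (f x)‖ ^ (2 : ℝ≥0∞).toReal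
        ≤ (max C 0) ^ (2 : ℝ≥0∞).toReal * ‖f x‖ ^ (2 : ℝ≥0∞).toReal := by
    intro f x
    have h1 : ‖T x (f x)‖ ≤ max C 0 * ‖f x‖ :=
      ((T x).le_opNorm (f x)).trans
        (mul_le_mul_of_nonneg_right (hC' x) (norm_nonneg _))
    calc ‖T x (f x)‖ ^ (2 : ℝ≥0∞).toReal
        ≤ (max C 0 * ‖f x‖) ^ (2 : ℝ≥0∞).toReal :=
          Real.rpow_le_rpow (norm_nonneg _) h1 hr.le
      _ = (max C 0) ^ (2 : ℝ≥0∞).toReal * ‖f x‖ ^ (2 : ℝ≥0∞).toReal :=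
          Real.mul_rpow (le_max_right _ _) (norm_nonneg _)
  have mem : ∀ f : lp (fun _ : X => H) 2, Memℓp (fun x => T x (f x)) 2 := by
    intro f
    apply memℓp_gen
    exact Summable.of_nonneg_of_le
      (fun x => Real.rpow_nonneg (norm_nonneg _) _) (key f)
      (((lp.memℓp f).summable hr).mul_left _)
  exact LinearMap.mkContinuous
    { toFun := fun f => ⟨fun x => T x (f x), mem f⟩
      map_add' := fun f g => by
        apply lp.ext; funext x
        have := congrFun (lp.coeFn_add f g) x
        show T x ((f + g) x) = _
        rw [this]
        exact map_add (T x) (f x) (g x)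
      map_smul' := fun c f => by
        apply lp.ext; funext x
        have := congrFun (lp.coeFn_smul c f) x
        show T x ((c • f) x) = _
        rw [this]
        simp [lp.coeFn_smul] }
    (max C 0) (fun f => by
      refine lp.norm_le_of_tsum_le hr (by positivity) ?_
      show ∑' (x : X), ‖T x (f x)‖ ^ (2 : ℝ≥0∞).toReal ≤ _
      calc ∑' (x : X), ‖T x (f x)‖ ^ (2 : ℝ≥0∞).toReal
          ≤ ∑' (x : X), (max C 0) ^ (2 : ℝ≥0∞).toReal * ‖f x‖ ^ (2 : ℝ≥0∞).toReal :=
            Summable.tsum_le_tsum (key f)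
              (Summable.of_nonneg_of_le
                (fun x => Real.rpow_nonneg (norm_nonneg _) _) (key f)
                (((lp.memℓp f).summable hr).mul_left _))
              (((lp.memℓp f).summable hr).mul_left _)
        _ = (max C 0) ^ (2 : ℝ≥0∞).toReal * ∑' (x : X), ‖f x‖ ^ (2 : ℝ≥0∞).toReal :=
            tsum_mul_left
        _ = (max C 0) ^ (2 : ℝ≥0∞).toReal * ‖f‖ ^ (2 : ℝ≥0∞).toReal := by
            rw [lp.norm_rpow_eq_tsum hr]
        _ = (max C 0 * ‖f‖) ^ (2 : ℝ≥0∞).toReal :=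
            (Real.mul_rpow (by positivity) (norm_nonneg _)).symm)

section CB

variable {A' B' : Type*} [AddCommMonoid A'] [Module ℂ A'] [AddCommMonoid B'] [Module ℂ B']
variable {K : Type*} [NormedAddCommGroup K] [InnerProductSpace ℂ K] [CompleteSpace K]

/-- All matrix amplifications of `Φ` are bounded by `C`, where matrices over the abstract
spaces are normed through the given embeddings into concrete operator algebras. -/
def CBBound (ιA : A' → (H →L[ℂ] H)) (ιB : B' → (K →L[ℂ] K))
    (Φ : A' →ₗ[ℂ] B') (C : ℝ) : Prop :=
  ∀ (n : ℕ) (M : Matrix (Fin n) (Fin n) A'),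
    ‖matOp (M.map (fun a => ιB (Φ a)))‖ ≤ C * ‖matOp (M.map ιA)‖

/-- Complete boundedness of a linear map, relative to embeddings of its domain and
codomain into concrete operator algebras. -/
def IsCB (ιA : A' → (H →L[ℂ] H)) (ιB : B' → (K →L[ℂ] K)) (Φ : A' →ₗ[ℂ] B') : Prop :=
  ∃ C : ℝ, 0 ≤ C ∧ CBBound ιA ιB Φ C

/-- The completely bounded norm of a linear map, relative to embeddings of its domain
and codomain into concrete operator algebras. -/
def cbNorm (ιA : A' → (H →L[ℂ] H)) (ιB : B' → (K →L[ℂ] K)) (Φ : A' →ₗ[ℂ] B') : ℝ :=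
  sInf { C : ℝ | 0 ≤ C ∧ CBBound ιA ιB Φ C }

end CB

section Schur

variable {A : Type*} [NonUnitalCStarAlgebra A]

/-- A *-representation is non-degenerate if the span of the vectors in its range is dense. -/
def NondegenerateRep {K : Type*} [NormedAddCommGroup K] [InnerProductSpace ℂ K]
    [CompleteSpace K] (ρ : A →⋆ₙₐ[ℂ] (K →L[ℂ] K)) : Prop :=
  Dense (Submodule.span ℂ {ξ : K | ∃ (a : A) (v : K), ρ a v = ξ} : Set K)

/-- A function `φ : X × X → CB(A, B(H))` is of positive type if it maps positive
matrices to positive matrices, entrywise. -/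
def PositiveType (φ : X → X → (A →ₗ[ℂ] (H →L[ℂ] H))) : Prop :=
  ∀ (m : ℕ) (x : Fin m → X) (a : Matrix (Fin m) (Fin m) A),
    MatPos a → MatPos (Matrix.of fun p q => φ (x p) (x q) (a p q))

/-- A kernel `k : X × X → A` is positive definite if all the matrices obtained by
sampling it at finitely many points are positive. -/
def PosDefKernel (k : X × X → A) : Prop :=
  ∀ (n : ℕ) (x : Fin n → X), MatPos (Matrix.of fun i j => k (x i, x j))

/-- The operator `T_k` on `ℓ²(X,H)` of a kernel `k : X × X → A`, via the embedding
`ι : A → B(H)` (it is `0` unless `k` is finitely supported). -/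
def TKer (ι : A →⋆ₙₐ[ℂ] (H →L[ℂ] H)) (k : X × X → A) :
    lp (fun _ : X => H) 2 →L[ℂ] lp (fun _ : X => H) 2 :=
  TOp (fun p => ι (k p))

/-- `C` is a complete bound for the Schur multiplication map `S_φ : T_k ↦ T_{φ·k}`,
tested on (matrices of) finitely supported kernels, which span a dense subspace of
`K(ℓ²(X)) ⊗ A`. -/
def SchurBound (ι : A →⋆ₙₐ[ℂ] (H →L[ℂ] H)) (φ : X → X → (A →ₗ[ℂ] (H →L[ℂ] H)))
    (C : ℝ) : Prop :=
  ∀ (n : ℕ) (k : Fin n → Fin n → (X × X → A)),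
    (∀ i j, (Function.support (k i j)).Finite) →
    ‖matOp (Matrix.of fun i j => TOp (fun p => φ p.1 p.2 (k i j p)))‖
      ≤ C * ‖matOp (Matrix.of fun i j => TKer ι (k i j))‖

/-- `φ` is a Schur `A`-multiplier: the map `S_φ : T_k ↦ T_{φ·k}` is completely bounded. -/
def IsSchurMultiplier (ι : A →⋆ₙₐ[ℂ] (H →L[ℂ] H))
    (φ : X → X → (A →ₗ[ℂ] (H →L[ℂ] H))) : Prop :=
  ∃ C : ℝ, 0 ≤ C ∧ SchurBound ι φ C

/-- The multiplier norm `‖φ‖_m = ‖S_φ‖_cb` of a Schur `A`-multiplier. -/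
def schurNorm (ι : A →⋆ₙₐ[ℂ] (H →L[ℂ] H))
    (φ : X → X → (A →ₗ[ℂ] (H →L[ℂ] H))) : ℝ :=
  sInf { C : ℝ | 0 ≤ C ∧ SchurBound ι φ C }

/-- Complete positivity of the map `S_φ : K(ℓ²(X)) ⊗ A → K(ℓ²(X)) ⊗ B(H)`, tested on
(matrices of) finitely supported kernels. -/
def SchurCP (ι : A →⋆ₙₐ[ℂ] (H →L[ℂ] H)) (φ : X → X → (A →ₗ[ℂ] (H →L[ℂ] H))) : Prop :=
  ∀ (n : ℕ) (k : Fin n → Fin n → (X × X → A)),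
    (∀ i j, (Function.support (k i j)).Finite) →
    MatPos (Matrix.of fun i j => TKer ι (k i j)) →
    MatPos (Matrix.of fun i j => TOp (fun p => φ p.1 p.2 (k i j p)))

end Schur

section Dynamics

variable {A : Type*} [NonUnitalCStarAlgebra A]

/-- `α` is an action of the group `G` on `A` by *-automorphisms. -/
def IsAction (α : G → A ≃⋆ₐ[ℂ] A) : Prop :=
  (∀ a, α 1 a = a) ∧ ∀ s t : G, ∀ a : A, α (s * t) a = α s (α t a)

/-- A *-automorphism of `A`, as a `ℂ`-linear map. -/
def autLin (e : A ≃⋆ₐ[ℂ] A) : A →ₗ[ℂ] A :=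
  { toFun := e
    map_add' := fun a b => map_add e a b
    map_smul' := fun c a => map_smul e c a }

/-- The representation `π` of `A` on `ℓ²(G,H)`: `(π(a)ξ)(s) = α_{s⁻¹}(a)(ξ(s))`. -/
def piRep (ι : A →⋆ₙₐ[ℂ] (H →L[ℂ] H)) (α : G → A ≃⋆ₐ[ℂ] A) (a : A) :
    lp (fun _ : G => H) 2 →L[ℂ] lp (fun _ : G => H) 2 :=
  diagOp (fun s => ι (α s⁻¹ a)) ‖a‖ (fun s =>
    (NonUnitalStarAlgHom.norm_apply_le ι (α s⁻¹ a)).trans_eq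
      (StarAlgEquiv.norm_map (α s⁻¹) a))

/-- The reduced crossed product `A ⋊_{α,r} G`, realised concretely on `ℓ²(G,H)` as the
norm closure of the linear span of the operators `π(a)λ_t`. -/
def CrossedSet (ι : A →⋆ₙₐ[ℂ] (H →L[ℂ] H)) (α : G → A ≃⋆ₐ[ℂ] A) :
    Set (lp (fun _ : G => H) 2 →L[ℂ] lp (fun _ : G => H) 2) :=
  closure (Submodule.span ℂ
    {x | ∃ (a : A) (t : G), x = piRep ι α a * lam t} : Set _)

/-- `E` is the canonical conditional expectation of the reduced crossed product onto `A`: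
it is characterised by `ι (E x) = (x)_{e,e}`, the `(e,e)` matrix entry of `x`. -/
def IsCondExp (ι : A →⋆ₙₐ[ℂ] (H →L[ℂ] H)) (α : G → A ≃⋆ₐ[ℂ] A)
    (E : (lp (fun _ : G => H) 2 →L[ℂ] lp (fun _ : G => H) 2) →ₗ[ℂ] A) : Prop :=
  ∀ x ∈ CrossedSet ι α, ι (E x) = (lpEval (1 : G)) ∘L x ∘L (lpSingle (1 : G))

/-- The defining property of the map `S_F` associated with `F : G → CB(A)`:
`S_F(π(a)λ_s) = π(F(s)(a))λ_s`. -/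
def HSGenProp (ι : A →⋆ₙₐ[ℂ] (H →L[ℂ] H)) (α : G → A ≃⋆ₐ[ℂ] A)
    (F : G → (A →ₗ[ℂ] A))
    (Φ : (lp (fun _ : G => H) 2 →L[ℂ] lp (fun _ : G => H) 2) →ₗ[ℂ]
         (lp (fun _ : G => H) 2 →L[ℂ] lp (fun _ : G => H) 2)) : Prop :=
  ∀ (a : A) (s : G), Φ (piRep ι α a * lam s) = piRep ι α (F s a) * lam s

/-- `Φ` maps the reduced crossed product into itself and, on matrices over the reduced
crossed product, all amplifications of `Φ` are bounded by `C`. -/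
def CBBoundOnCrossed (ι : A →⋆ₙₐ[ℂ] (H →L[ℂ] H)) (α : G → A ≃⋆ₐ[ℂ] A)
    (Φ : (lp (fun _ : G => H) 2 →L[ℂ] lp (fun _ : G => H) 2) →ₗ[ℂ]
         (lp (fun _ : G => H) 2 →L[ℂ] lp (fun _ : G => H) 2)) (C : ℝ) : Prop :=
  ∀ (n : ℕ) (M : Matrix (Fin n) (Fin n)
      (lp (fun _ : G => H) 2 →L[ℂ] lp (fun _ : G => H) 2)),
    (∀ i j, M i j ∈ CrossedSet ι α) →
      ‖matOp (M.map Φ)‖ ≤ C * ‖matOp M‖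

/-- `Φ` is completely positive on the reduced crossed product: matrices over the crossed
product which are positive are mapped to positive matrices. -/
def CPOnCrossed (ι : A →⋆ₙₐ[ℂ] (H →L[ℂ] H)) (α : G → A ≃⋆ₐ[ℂ] A)
    (Φ : (lp (fun _ : G => H) 2 →L[ℂ] lp (fun _ : G => H) 2) →ₗ[ℂ]
         (lp (fun _ : G => H) 2 →L[ℂ] lp (fun _ : G => H) 2)) : Prop :=
  (∀ x ∈ CrossedSet ι α, Φ x ∈ CrossedSet ι α) ∧
  ∀ (n : ℕ) (M : Matrix (Fin n) (Fin n)
      (lp (fun _ : G => H) 2 →L[ℂ] lp (fun _ : G => H) 2)),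
    (∀ i j, M i j ∈ CrossedSet ι α) → MatPos M → MatPos (M.map Φ)

/-- `F : G → CB(A)` is a Herz-Schur `(A,G,α)`-multiplier: the map `S_F` determined by
`S_F(π(a)λ_s) = π(F(s)(a))λ_s` extends to a completely bounded map on `A ⋊_{α,r} G`. -/
def IsHerzSchurMultiplier (ι : A →⋆ₙₐ[ℂ] (H →L[ℂ] H)) (α : G → A ≃⋆ₐ[ℂ] A)
    (F : G → (A →ₗ[ℂ] A)) : Prop :=
  ∃ Φ, HSGenProp ι α F Φ ∧ (∀ x ∈ CrossedSet ι α, Φ x ∈ CrossedSet ι α) ∧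
    ∃ C : ℝ, 0 ≤ C ∧ CBBoundOnCrossed ι α Φ C

/-- `F : G → CB(A)` is a completely positive Herz-Schur `(A,G,α)`-multiplier: the map
`S_F` extends to a completely positive (hence completely bounded) map on `A ⋊_{α,r} G`. -/
def IsHerzSchurMultiplierCP (ι : A →⋆ₙₐ[ℂ] (H →L[ℂ] H)) (α : G → A ≃⋆ₐ[ℂ] A)
    (F : G → (A →ₗ[ℂ] A)) : Prop :=
  ∃ Φ, HSGenProp ι α F Φ ∧ CPOnCrossed ι α Φ ∧
    ∃ C : ℝ, 0 ≤ C ∧ CBBoundOnCrossed ι α Φ C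

/-- The function `N(F) : G × G → CB(A)`, `N(F)(s,t)(a) = α_{s⁻¹}(F(st⁻¹)(α_s(a)))`. -/
def NF (α : G → A ≃⋆ₐ[ℂ] A) (F : G → (A →ₗ[ℂ] A)) : G → G → (A →ₗ[ℂ] A) :=
  fun s t => (autLin (α s⁻¹)) ∘ₗ (F (s * t⁻¹)) ∘ₗ (autLin (α s))

end Dynamics

section Trace

variable {A : Type*} [NonUnitalCStarAlgebra A]

/-- `τ` is a positive linear functional. -/
def IsPositiveFunctional (τ : A →ₗ[ℂ] ℂ) : Prop :=
  ∀ a : A, 0 ≤ τ (star a * a)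

/-- `τ` is tracial. -/
def IsTracial (τ : A →ₗ[ℂ] ℂ) : Prop :=
  ∀ a b : A, τ (a * b) = τ (b * a)

/-- `τ` is faithful. -/
def IsFaithfulFunctional (τ : A →ₗ[ℂ] ℂ) : Prop :=
  ∀ a : A, τ (star a * a) = 0 → a = 0

/-- The `L²`-norm `‖a‖_{2,τ} = τ(a*a)^{1/2}` associated with a positive functional `τ`. -/
def l2norm (τ : A →ₗ[ℂ] ℂ) (a : A) : ℝ :=
  Real.sqrt (τ (star a * a)).re

/-- A map `Φ : A → A` is `L²`-bounded by `C` with respect to `τ`. -/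
def L2BoundedBy (τ : A →ₗ[ℂ] ℂ) (Φ : A →ₗ[ℂ] A) (C : ℝ) : Prop :=
  ∀ a : A, l2norm τ (Φ a) ≤ C * l2norm τ a

/-- A map `Φ : A → A` is `L²`-bounded with respect to `τ`, i.e. it extends to a bounded
operator `T_Φ` on `L²(A,τ)`. -/
def L2Bounded (τ : A →ₗ[ℂ] ℂ) (Φ : A →ₗ[ℂ] A) : Prop :=
  ∃ C : ℝ, 0 ≤ C ∧ L2BoundedBy τ Φ C

/-- The norm of the extension `T_Φ` of `Φ` to `L²(A,τ)`. -/
def l2OpNorm (τ : A →ₗ[ℂ] ℂ) (Φ : A →ₗ[ℂ] A) : ℝ :=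
  sInf { C : ℝ | 0 ≤ C ∧ L2BoundedBy τ Φ C }

/-- `Φ` is `L²`-compact with respect to `τ`: the image under `Φ` of the `L²`-unit ball of
`A` is totally bounded in the `L²`-norm; equivalently, the extension `T_Φ` of `Φ` to
`L²(A,τ)` is a compact operator. -/
def L2Compact (τ : A →ₗ[ℂ] ℂ) (Φ : A →ₗ[ℂ] A) : Prop :=
  ∀ ε : ℝ, 0 < ε → ∃ S : Finset A, ∀ a : A, l2norm τ a ≤ 1 →
    ∃ b ∈ S, l2norm τ (Φ a - b) < ε

end Trace

section Props

variable {A : Type*} [CStarAlgebra A]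

/-- The pair `(A,τ)` has the C*-algebra Haagerup property (Definition 3.1, Dong). -/
def CStarHaagerup (τ : A →ₗ[ℂ] ℂ) : Prop :=
  ∃ (I : Type) (_ : Nonempty I) (_ : SemilatticeSup I) (Φ : I → (A →ₗ[ℂ] A)),
    (∀ i, Φ i 1 = 1) ∧
    (∀ i, IsCompletelyPositive (Φ i)) ∧
    (∀ i (a : A), τ (Φ i (star a * a)) ≤ τ (star a * a)) ∧
    (∀ i, L2Compact τ (Φ i)) ∧
    (∀ a : A, Filter.Tendsto (fun i => l2norm τ (Φ i a - a)) Filter.atTop (nhds 0))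

/-- `A` is a nuclear C*-algebra: there is a net of finite-rank completely positive
contractions converging to the identity in the point-norm topology. -/
def NuclearCStarAlgebra (A : Type*) [NonUnitalCStarAlgebra A] : Prop :=
  ∃ (I : Type) (_ : Nonempty I) (_ : SemilatticeSup I) (Φ : I → (A →ₗ[ℂ] A)),
    (∀ i, IsCompletelyPositive (Φ i)) ∧
    (∀ i (a : A), ‖Φ i a‖ ≤ ‖a‖) ∧
    (∀ i, FiniteDimensional ℂ (LinearMap.range (Φ i))) ∧
    (∀ a : A, Filter.Tendsto (fun i => ‖Φ i a - a‖) Filter.atTop (nhds 0))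

/-- A discrete group `G` has the Haagerup property: there is a net of normalised
positive-definite functions on `G`, vanishing at infinity, converging pointwise to `1`. -/
def GroupHaagerup (G : Type*) [Group G] : Prop :=
  ∃ (I : Type) (_ : Nonempty I) (_ : SemilatticeSup I) (φ : I → G → ℂ),
    (∀ i, φ i 1 = 1) ∧
    (∀ i (n : ℕ) (s : Fin n → G) (μ : Fin n → ℂ),
      0 ≤ ∑ k, ∑ l, (starRingEnd ℂ) (μ k) * φ i ((s k)⁻¹ * s l) * μ l) ∧
    (∀ i, ∀ ε : ℝ, 0 < ε → ∃ S : Finset G, ∀ s ∉ S, ‖φ i s‖ ≤ ε) ∧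
    (∀ s : G, Filter.Tendsto (fun i => φ i s) Filter.atTop (nhds 1))

end Props

section More

variable {A : Type*} [NonUnitalCStarAlgebra A]

/-- A star homomorphism, as a `ℂ`-linear map. -/
def iotaLin {B : Type*} [NonUnitalCStarAlgebra B] (ι : A →⋆ₙₐ[ℂ] B) : A →ₗ[ℂ] B :=
  { toFun := ι
    map_add' := fun a b => map_add ι a b
    map_smul' := fun c a => map_smul ι c a }

/-- A function `φ : X × X → CB(A)` with values in the maps on `A` is of positive type. -/
def PositiveTypeA (φ : X → X → (A →ₗ[ℂ] A)) : Prop :=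
  ∀ (m : ℕ) (x : Fin m → X) (a : Matrix (Fin m) (Fin m) A),
    MatPos a → MatPos (Matrix.of fun p q => φ (x p) (x q) (a p q))

/-- The representation `π` of `A` on `ℓ²(G,H)`, as a linear map. -/
def piRepLin (ι : A →⋆ₙₐ[ℂ] (H →L[ℂ] H)) (α : G → A ≃⋆ₐ[ℂ] A) :
    A →ₗ[ℂ] (lp (fun _ : G => H) 2 →L[ℂ] lp (fun _ : G => H) 2) :=
  { toFun := piRep ι α
    map_add' := fun a b => by
      apply ContinuousLinearMap.ext; intro f
      apply lp.ext; funext s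
      have h1 : (((piRep ι α a + piRep ι α b) f :
          lp (fun _ : G => H) 2) : ∀ _ : G, H) s
          = ((piRep ι α a f : ∀ _ : G, H) s) + ((piRep ι α b f : ∀ _ : G, H) s) := by
        rw [ContinuousLinearMap.add_apply]
        exact congrFun (lp.coeFn_add (piRep ι α a f) (piRep ι α b f)) s
      show ι (α s⁻¹ (a + b)) (f s) = _
      rw [h1]
      show _ = ι (α s⁻¹ a) (f s) + ι (α s⁻¹ b) (f s)
      rw [map_add (α s⁻¹), map_add ι, ContinuousLinearMap.add_apply]
    map_smul' := fun c a => by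
      apply ContinuousLinearMap.ext; intro f
      apply lp.ext; funext s
      have h1 : (((c • piRep ι α a) f :
          lp (fun _ : G => H) 2) : ∀ _ : G, H) s
          = c • ((piRep ι α a f : ∀ _ : G, H) s) := by
        rw [ContinuousLinearMap.smul_apply]
        exact congrFun (lp.coeFn_smul c (piRep ι α a f)) s
      show ι (α s⁻¹ (c • a)) (f s) = _
      rw [RingHom.id_apply, h1]
      show _ = c • ι (α s⁻¹ a) (f s)
      rw [map_smul (α s⁻¹), map_smul ι, ContinuousLinearMap.smul_apply] }

/-- The completely bounded norm of a map defined on the reduced crossed product. -/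
def cbNormOnCrossed (ι : A →⋆ₙₐ[ℂ] (H →L[ℂ] H)) (α : G → A ≃⋆ₐ[ℂ] A)
    (Φ : (lp (fun _ : G => H) 2 →L[ℂ] lp (fun _ : G => H) 2) →ₗ[ℂ]
         (lp (fun _ : G => H) 2 →L[ℂ] lp (fun _ : G => H) 2)) : ℝ :=
  sInf { C : ℝ | 0 ≤ C ∧ CBBoundOnCrossed ι α Φ C }

/-- The `L²`-norm `‖x‖_{2,τ'}` on the reduced crossed product induced by the trace
`τ' = τ ∘ E`. -/
def l2normCr (τ : A →ₗ[ℂ] ℂ)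
    (E : (lp (fun _ : G => H) 2 →L[ℂ] lp (fun _ : G => H) 2) →ₗ[ℂ] A)
    (x : lp (fun _ : G => H) 2 →L[ℂ] lp (fun _ : G => H) 2) : ℝ :=
  Real.sqrt (τ (E (star x * x))).re

/-- The map `h_Φ : G → CB(A)` associated with a map `Φ` on the reduced crossed product:
`h_Φ(s)(a) = E(Φ(π(a)λ_s)λ_s*)`. -/
def hMap (ι : A →⋆ₙₐ[ℂ] (H →L[ℂ] H)) (α : G → A ≃⋆ₐ[ℂ] A)
    (E : (lp (fun _ : G => H) 2 →L[ℂ] lp (fun _ : G => H) 2) →ₗ[ℂ] A)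
    (Φ : (lp (fun _ : G => H) 2 →L[ℂ] lp (fun _ : G => H) 2) →ₗ[ℂ]
         (lp (fun _ : G => H) 2 →L[ℂ] lp (fun _ : G => H) 2))
    (s : G) : A →ₗ[ℂ] A :=
  E ∘ₗ (LinearMap.mulRight ℂ (star (lam s))) ∘ₗ Φ ∘ₗ
    (LinearMap.mulRight ℂ (lam (H := H) s)) ∘ₗ piRepLin ι α

end More

section BigProps

open Filter

variable {A : Type*} [CStarAlgebra A]

/-- The Haagerup property for the `C*`-dynamical system `(A,G,α,τ)` (Definition 3.3). -/
def DynHaagerup (ι : A →⋆ₙₐ[ℂ] (H →L[ℂ] H)) (α : G → A ≃⋆ₐ[ℂ] A)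
    (τ : A →ₗ[ℂ] ℂ) : Prop :=
  ∃ (I : Type) (_ : Nonempty I) (_ : SemilatticeSup I) (F : I → G → (A →ₗ[ℂ] A)),
    (∀ i, IsHerzSchurMultiplierCP ι α (F i)) ∧
    (∀ i, F i 1 1 = 1) ∧
    (∀ i (a : A), τ (F i 1 (star a * a)) ≤ τ (star a * a)) ∧
    (∀ i (t : G), L2Compact τ (F i t)) ∧
    (∀ i, ∀ ε : ℝ, 0 < ε → ∃ S : Finset G, ∀ s ∉ S, l2OpNorm τ (F i s) ≤ ε) ∧
    (∀ (t : G) (a : A),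
      Tendsto (fun i => l2norm τ (F i t a - a)) atTop (nhds 0))

/-- The C*-algebra Haagerup property for the reduced crossed product `A ⋊_{α,r} G`
endowed with the induced trace `τ' = τ ∘ E` (Definition 3.1). -/
def CrossedCStarHaagerup (ι : A →⋆ₙₐ[ℂ] (H →L[ℂ] H)) (α : G → A ≃⋆ₐ[ℂ] A)
    (τ : A →ₗ[ℂ] ℂ)
    (E : (lp (fun _ : G => H) 2 →L[ℂ] lp (fun _ : G => H) 2) →ₗ[ℂ] A) : Prop :=
  ∃ (I : Type) (_ : Nonempty I) (_ : SemilatticeSup I)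
    (Φ : I → ((lp (fun _ : G => H) 2 →L[ℂ] lp (fun _ : G => H) 2) →ₗ[ℂ]
              (lp (fun _ : G => H) 2 →L[ℂ] lp (fun _ : G => H) 2))),
    (∀ i, Φ i 1 = 1) ∧
    (∀ i, CPOnCrossed ι α (Φ i)) ∧
    (∀ i, ∀ x ∈ CrossedSet ι α, τ (E (Φ i (star x * x))) ≤ τ (E (star x * x))) ∧
    (∀ i, ∀ ε : ℝ, 0 < ε →
      ∃ S : Finset (lp (fun _ : G => H) 2 →L[ℂ] lp (fun _ : G => H) 2),
        ∀ x ∈ CrossedSet ι α, l2normCr τ E x ≤ 1 →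
          ∃ b ∈ S, l2normCr τ E (Φ i x - b) < ε) ∧
    (∀ x ∈ CrossedSet ι α,
      Tendsto (fun i => l2normCr τ E (Φ i x - x)) atTop (nhds 0))

end BigProps

section Nuc

open Filter

variable {A : Type*} [NonUnitalCStarAlgebra A]

/-- Nuclearity of the reduced crossed product `A ⋊_{α,r} G`: there is a net of
finite-rank completely positive contractions on it converging to the identity in the
point-norm topology. -/
def CrossedNuclear (ι : A →⋆ₙₐ[ℂ] (H →L[ℂ] H)) (α : G → A ≃⋆ₐ[ℂ] A) : Prop :=
  ∃ (I : Type) (_ : Nonempty I) (_ : SemilatticeSup I)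
    (Φ : I → ((lp (fun _ : G => H) 2 →L[ℂ] lp (fun _ : G => H) 2) →ₗ[ℂ]
              (lp (fun _ : G => H) 2 →L[ℂ] lp (fun _ : G => H) 2))),
    (∀ i, CPOnCrossed ι α (Φ i)) ∧
    (∀ i, ∀ x ∈ CrossedSet ι α, ‖Φ i x‖ ≤ ‖x‖) ∧
    (∀ i, FiniteDimensional ℂ
      (Submodule.span ℂ ((fun x => Φ i x) '' CrossedSet ι α))) ∧
    (∀ x ∈ CrossedSet ι α, Tendsto (fun i => ‖Φ i x - x‖) atTop (nhds 0))

/-- Nuclearity of the `C*`-dynamical system `(A,G,α)` (Definition 4.2): a net of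
completely positive, finitely supported Herz-Schur multipliers, with `‖F_i(e)‖_cb ≤ 1`,
with finite-rank values, converging to the identity pointwise in norm. -/
def DynNuclear (ι : A →⋆ₙₐ[ℂ] (H →L[ℂ] H)) (α : G → A ≃⋆ₐ[ℂ] A) : Prop :=
  ∃ (I : Type) (_ : Nonempty I) (_ : SemilatticeSup I) (F : I → G → (A →ₗ[ℂ] A)),
    (∀ i, IsHerzSchurMultiplierCP ι α (F i)) ∧
    (∀ i, (Function.support (F i)).Finite) ∧
    (∀ i, CBBound (fun a => ι a) (fun a => ι a) (F i 1) 1) ∧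
    (∀ i (s : G), FiniteDimensional ℂ (LinearMap.range (F i s))) ∧
    (∀ (s : G) (a : A), Tendsto (fun i => ‖F i s a - a‖) atTop (nhds 0))

end Nuc

section Amen

open Filter

variable {A : Type*} [CStarAlgebra A]

/-- Amenability of the action `α` of a discrete group `G` on a unital C*-algebra `A`
(Definition 4.5): a net of finitely supported functions `T_i : G → Z(A)⁺` with
`Σ_s T_i(s)² = 1` and `‖Σ_s (T_i(s) - α_t(T_i(t⁻¹s)))*(T_i(s) - α_t(T_i(t⁻¹s)))‖ → 0`. -/
def AmenableAction {G : Type*} [Group G] (α : G → A ≃⋆ₐ[ℂ] A) : Prop :=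
  ∃ (I : Type) (_ : Nonempty I) (_ : SemilatticeSup I) (T : I → G → A),
    (∀ i, (Function.support (T i)).Finite) ∧
    (∀ i (s : G) (c : A), Commute (T i s) c) ∧
    (∀ i (s : G), ∃ b : A, T i s = star b * b) ∧
    (∀ i, ∑ᶠ s : G, T i s * T i s = 1) ∧
    (∀ t : G, Tendsto (fun i =>
        ‖∑ᶠ s : G, star (T i s - α t (T i (t⁻¹ * s))) *
          (T i s - α t (T i (t⁻¹ * s)))‖) atTop (nhds 0))

end Amen

universe u v w

/-- Data for a Stinespring-type representation of an operator-valued function on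
`X × X`: a Hilbert space `K`, a *-representation `ρ : A → B(K)` and
families of operators `V, W : X → B(H,K)`. -/
structure OpValuedRep (A : Type u) [NonUnitalCStarAlgebra A]
    (H : Type v) [NormedAddCommGroup H] [InnerProductSpace ℂ H] [CompleteSpace H]
    (X : Type w) where
  /-- the Hilbert space of the representation -/
  K : Type (max u v w)
  [nacg : NormedAddCommGroup K]
  [ips : InnerProductSpace ℂ K]
  [cpl : CompleteSpace K]
  /-- the representation -/
  ρ : A →⋆ₙₐ[ℂ] (K →L[ℂ] K)
  /-- the left family of operators -/
  V : X → (H →L[ℂ] K)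
  /-- the right family of operators -/
  W : X → (H →L[ℂ] K)

attribute [instance] OpValuedRep.nacg OpValuedRep.ips OpValuedRep.cpl

end
noncomputable section
open scoped ComplexOrder ENNReal
open Matrix

/-!
Write `π` and `λ` for the canonical maps of `A` and `G` into the operators on `ℓ²(G, H)`, and view
such operators as matrices indexed by `G`; the entries of an element of `A ⋊_{α,r} G` lie in `A`.

If `(Θ_i)` approximates the identity of the crossed product, then taking the `(1, 1)`-entry of
`Θ_i(π(a))` approximates the identity of `A`: both `π` and passage to an entry on the diagonal are
completely positive and contractive.

Conversely, let `(Φ_i)` approximate the identity of `A` and let `(T_j)` witness amenability.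
Truncate an operator to the entries indexed by the support of `T_j`, apply `Φ_i` entrywise, and
reassemble by conjugation with the row `(π(T_j(p)) λ_p)_p`. The resulting map has finite rank and
is completely positive with value of norm at most one at the unit, hence contractive. In the limit
over `i` it sends `π(a) λ_t` to `π(a ∑_q T_j(tq) α_t(T_j(q))) λ_t`. Because `T_j` is a unit vector
in `ℓ²(G, A)`, amenability says exactly that this sum tends to `1`, and the two limits are combined
by Kelley's theorem on iterated limits.
-/

section MatrixPositivity

section StarHomomorphisms

variable {R S : Type*} [NonUnitalCStarAlgebra R] [NonUnitalCStarAlgebra S] {f : R →⋆ₙₐ[ℂ] S}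

lemma exists_eq_star_mul_self_of_map (hf : Function.Injective f) {a : R}
    (ha : ∃ b, f a = star b * b) : ∃ c, a = star c * c := by
  let _ : PartialOrder R := CStarAlgebra.spectralOrder R
  have _ : StarOrderedRing R := CStarAlgebra.spectralOrderedRing R
  let _ : PartialOrder S := CStarAlgebra.spectralOrder S
  have _ : StarOrderedRing S := CStarAlgebra.spectralOrderedRing S
  rw [← CStarAlgebra.nonneg_iff_eq_star_mul_self] at ha ⊢
  have a_selfAdjoint : IsSelfAdjoint a :=
    hf <| by rw [map_star, (IsSelfAdjoint.of_nonneg ha).star_eq]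
  have map_negPart : (f a)⁻ = f a⁻ :=
    (CFC.posPart_negPart_unique (a := f a) (b := f a⁺) (c := f a⁻)
      (by rw [← map_sub, CFC.posPart_sub_negPart a a_selfAdjoint])
      (by rw [← map_mul, CFC.posPart_mul_negPart, map_zero])
      (map_nonneg f (CFC.posPart_nonneg a)) (map_nonneg f (CFC.negPart_nonneg a))).2
  have negPart_eq_zero : a⁻ = 0 := hf <| by
    rw [map_zero, ← map_negPart, CFC.negPart_eq_zero_iff _ (.of_nonneg ha)]
    exact ha
  exact (CFC.negPart_eq_zero_iff a a_selfAdjoint).1 negPart_eq_zero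

lemma MatPos.map {ν : Type*} [Fintype ν] {M : Matrix ν ν R} (hM : MatPos M) (f : R →⋆ₙₐ[ℂ] S) :
    MatPos (M.map f) := by
  obtain ⟨N, rfl⟩ := hM
  exact ⟨N.map f, by rw [Matrix.map_mul, Matrix.conjTranspose_map _ fun a => map_star f a]⟩

lemma MatPos.of_map {ν : Type*} [Fintype ν] (hf : Function.Injective f) {M : Matrix ν ν R}
    (hM : MatPos (M.map f)) : MatPos M := by
  let _ : PartialOrder R := CStarAlgebra.spectralOrder R
  have _ : StarOrderedRing R := CStarAlgebra.spectralOrderedRing R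
  let _ : PartialOrder S := CStarAlgebra.spectralOrder S
  have _ : StarOrderedRing S := CStarAlgebra.spectralOrderedRing S
  have map_injective : Function.Injective (CStarMatrix.mapₙₐ (n := ν) f) := fun M N hMN => by
    ext i j
    exact hf (congrFun (congrFun hMN i) j)
  exact exists_eq_star_mul_self_of_map map_injective (a := CStarMatrix.ofMatrix M) hM

end StarHomomorphisms

section Representation

variable {ν : Type*} [Fintype ν]
variable {H : Type*} [NormedAddCommGroup H] [InnerProductSpace ℂ H]

lemma matOp_apply (M : Matrix ν ν (H →L[ℂ] H)) (ξ : PiLp 2 (fun _ : ν => H)) (i : ν) :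
    matOp M ξ i = ∑ j, M i j (ξ j) := by
  simp [matOp]

lemma inner_matOp (M : Matrix ν ν (H →L[ℂ] H)) (ξ η : PiLp 2 (fun _ : ν => H)) :
    inner ℂ ξ (matOp M η) = ∑ i, ∑ j, inner ℂ (ξ i) (M i j (η j)) := by
  simp [PiLp.inner_apply, matOp_apply, inner_sum]

variable [CompleteSpace H]

lemma exists_eq_star_mul_self_iff_inner_nonneg {T : H →L[ℂ] H} :
    (∃ S, T = star S * S) ↔ ∀ ξ, 0 ≤ inner ℂ ξ (T ξ) := by
  rw [← CStarAlgebra.nonneg_iff_eq_star_mul_self, ContinuousLinearMap.nonneg_iff_isPositive]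
  refine ⟨fun hT => hT.inner_nonneg_right, fun hT => ?_⟩
  rw [ContinuousLinearMap.isPositive_iff_complex]
  intro ξ
  have inner_nonneg : 0 ≤ inner ℂ (T ξ) ξ := by
    rw [← inner_conj_symm]
    exact star_nonneg_iff.2 (hT ξ)
  exact ⟨(Complex.eq_re_of_ofReal_le inner_nonneg).symm, (Complex.nonneg_iff.1 inner_nonneg).1⟩

/-- `matOp` as a star homomorphism, so that positivity of an operator matrix can be tested on the
Hilbert sum of copies of `H` indexed by `ν`. -/
def matOpHom (ν H : Type*) [Fintype ν] [NormedAddCommGroup H] [InnerProductSpace ℂ H]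
    [CompleteSpace H] :
    CStarMatrix ν ν (H →L[ℂ] H) →⋆ₙₐ[ℂ]
      (PiLp 2 (fun _ : ν => H) →L[ℂ] PiLp 2 (fun _ : ν => H)) where
  toFun M := matOp (CStarMatrix.ofMatrix.symm M)
  map_smul' c M := by
    ext ξ i
    simp [matOp_apply, Finset.smul_sum]
  map_zero' := by
    ext ξ i
    simp [matOp_apply]
  map_add' M N := by
    ext ξ i
    simp [matOp_apply, Finset.sum_add_distrib]
  map_mul' M N := by
    ext ξ i
    simpa [matOp_apply, CStarMatrix.mul_apply] using Finset.sum_comm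
  map_star' M := by
    rw [ContinuousLinearMap.star_eq_adjoint, ContinuousLinearMap.eq_adjoint_iff]
    intro ξ η
    rw [inner_matOp, ← inner_conj_symm, inner_matOp, Finset.sum_comm]
    simp [CStarMatrix.star_apply, ContinuousLinearMap.star_eq_adjoint,
      ContinuousLinearMap.adjoint_inner_left]

lemma matOpHom_apply (M : Matrix ν ν (H →L[ℂ] H)) :
    matOpHom ν H (CStarMatrix.ofMatrix M) = matOp M := rfl

lemma matOpHom_injective : Function.Injective (matOpHom ν H) := by
  classical
  intro M N hMN
  ext i j v
  have := congrArg (fun T => T (WithLp.toLp 2 (Pi.single j v)) i) hMN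
  simpa [matOpHom, matOp_apply, Pi.single_apply, apply_ite] using this

lemma matPos_iff_exists_matOp_eq {M : Matrix ν ν (H →L[ℂ] H)} :
    MatPos M ↔ ∃ S, matOp M = star S * S := by
  constructor
  · rintro ⟨N, rfl⟩
    refine ⟨matOp N, ?_⟩
    rw [← matOpHom_apply, ← matOpHom_apply, ← map_star, ← map_mul]
    rfl
  · exact exists_eq_star_mul_self_of_map (f := matOpHom ν H) matOpHom_injective
      (a := CStarMatrix.ofMatrix M)

lemma matPos_iff_sum_inner_nonneg {M : Matrix ν ν (H →L[ℂ] H)} :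
    MatPos M ↔ ∀ ξ : ν → H, 0 ≤ ∑ i, ∑ j, inner ℂ (ξ i) (M i j (ξ j)) := by
  rw [matPos_iff_exists_matOp_eq, exists_eq_star_mul_self_iff_inner_nonneg]
  simp only [inner_matOp]
  exact ⟨fun h ξ => h (WithLp.toLp 2 ξ), fun h ξ => h ξ⟩

end Representation

section NormBounds

lemma MatPos.submatrix_equiv {R ν μ : Type*} [NonUnitalSemiring R] [StarRing R] [Fintype ν]
    [Fintype μ] {M : Matrix ν ν R} (hM : MatPos M) (e : μ ≃ ν) : MatPos (M.submatrix e e) := by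
  obtain ⟨N, rfl⟩ := hM
  exact ⟨N.submatrix e e, by
    rw [Matrix.conjTranspose_submatrix, Matrix.submatrix_mul_equiv]⟩

lemma IsCompletelyPositive.matPos_map {R S ν : Type*} [NonUnitalSemiring R] [StarRing R]
    [Module ℂ R] [NonUnitalSemiring S] [StarRing S] [Module ℂ S] [Fintype ν]
    {Φ : R →ₗ[ℂ] S} (hΦ : IsCompletelyPositive Φ) {M : Matrix ν ν R} (hM : MatPos M) :
    MatPos (M.map Φ) := by
  let e := Fintype.equivFin ν
  simpa [Matrix.submatrix_map] using (hΦ _ _ (hM.submatrix_equiv e.symm)).submatrix_equiv e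

lemma MatPos.norm_apply_sq_le {R ν : Type*} [NonUnitalCStarAlgebra R] [Fintype ν]
    {M : Matrix ν ν R} (hM : MatPos M) (i j : ν) : ‖M i j‖ ^ 2 ≤ ‖M i i‖ * ‖M j j‖ := by
  let _ : PartialOrder R := CStarAlgebra.spectralOrder R
  have _ : StarOrderedRing R := CStarAlgebra.spectralOrderedRing R
  obtain ⟨N, rfl⟩ := hM
  let row (i : ν) : WithCStarModule R (ν → R) := (WithCStarModule.equiv R (ν → R)).symm (Nᴴ i)
  have apply_eq_inner (i j : ν) : (Nᴴ * N) i j = inner R (row j) (row i) := by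
    simp [row, WithCStarModule.pi_inner, WithCStarModule.inner_def, Matrix.mul_apply]
  simp only [apply_eq_inner, ← CStarModule.norm_sq_eq R, ← mul_pow]
  gcongr
  exact (CStarModule.norm_inner_le _).trans_eq (mul_comm _ _)

variable {R : Type*} [CStarAlgebra R]

lemma matPos_norm_block (x : R) :
    MatPos !![(‖x‖ : ℂ) • (1 : R), x; star x, (‖x‖ : ℂ) • (1 : R)] := by
  let _ : PartialOrder R := CStarAlgebra.spectralOrder R
  have _ : StarOrderedRing R := CStarAlgebra.spectralOrderedRing R
  obtain rfl | hx := eq_or_ne x 0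
  · exact ⟨0, by ext i j; fin_cases i <;> fin_cases j <;> simp⟩
  have norm_pos : 0 < ‖x‖ := norm_pos_iff.2 hx
  have star_mul_le : ‖x‖⁻¹ • (star x * x) ≤ ‖x‖ • (1 : R) := by
    calc ‖x‖⁻¹ • (star x * x) ≤ ‖x‖⁻¹ • algebraMap ℝ R (‖x‖ ^ 2) :=
          smul_le_smul_of_nonneg_left CStarAlgebra.star_mul_le_algebraMap_norm_sq (by positivity)
      _ = ‖x‖ • (1 : R) := by
          rw [Algebra.algebraMap_eq_smul_one, smul_smul]
          congr 1
          field_simp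
  obtain ⟨b, hb⟩ := CStarAlgebra.nonneg_iff_eq_star_mul_self.1 (sub_nonneg.2 star_mul_le)
  refine ⟨!![√‖x‖ • (1 : R), (√‖x‖)⁻¹ • x; 0, b], ?_⟩
  have sqrt_ne_zero : √‖x‖ ≠ 0 := (Real.sqrt_pos.2 norm_pos).ne'
  have sqrt_mul_sqrt : √‖x‖ * √‖x‖ = ‖x‖ := Real.mul_self_sqrt norm_pos.le
  ext i j
  fin_cases i <;> fin_cases j <;>
    simp [Matrix.mul_apply, Fin.sum_univ_two, smul_smul, sqrt_ne_zero, sqrt_mul_sqrt, ← mul_inv,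
      ← hb]

lemma norm_map_le_of_matPos_map {S : Type*} [NonUnitalCStarAlgebra S] {V : Submodule ℂ R}
    (one_mem : 1 ∈ V) (star_mem : ∀ x ∈ V, star x ∈ V) {Φ : R →ₗ[ℂ] S}
    (hΦ : ∀ M : Matrix (Fin 2) (Fin 2) R, (∀ i j, M i j ∈ V) → MatPos M → MatPos (M.map Φ))
    (hΦ1 : ‖Φ 1‖ ≤ 1) {x : R} (hx : x ∈ V) : ‖Φ x‖ ≤ ‖x‖ := by
  have diag_mem : ‖x‖ • (1 : R) ∈ V := by simpa using V.smul_mem (‖x‖ : ℂ) one_mem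
  have block_pos :=
    hΦ _ (by simp [Fin.forall_fin_two, diag_mem, hx, star_mem]) (matPos_norm_block x)
  have norm_diag_le : ‖Φ ((‖x‖ : ℂ) • 1)‖ ≤ ‖x‖ := by
    simpa [norm_smul] using mul_le_of_le_one_right (norm_nonneg x) hΦ1
  refine abs_le_of_sq_le_sq' ?_ (norm_nonneg x) |>.2
  calc ‖Φ x‖ ^ 2 ≤ ‖Φ ((‖x‖ : ℂ) • 1)‖ * ‖Φ ((‖x‖ : ℂ) • 1)‖ := block_pos.norm_apply_sq_le 0 1
    _ ≤ ‖x‖ ^ 2 := by rw [sq]; gcongr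

end NormBounds

end MatrixPositivity

section L2Operators

/-- The bounded operators on `ℓ²(X, H)`, viewed as `X × X` matrices over `B(H)` through
`matEntry`. -/
abbrev L2Op (X H : Type*) [NormedAddCommGroup H] [InnerProductSpace ℂ H] : Type _ :=
  lp (fun _ : X => H) 2 →L[ℂ] lp (fun _ : X => H) 2

variable {X H : Type*} [NormedAddCommGroup H] [InnerProductSpace ℂ H]

lemma lpSingle_apply [hX : DecidableEq X] (x y : X) (ξ : H) :
    (lpSingle x ξ : lp (fun _ : X => H) 2) y = if y = x then ξ else 0 := by
  obtain rfl : hX = fun _ _ => Classical.propDecidable _ := Subsingleton.elim _ _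
  classical
  exact (lp.single_apply (E := fun _ : X => H) 2 x ξ y).trans (Pi.single_apply x ξ y)

lemma inner_lpSingle_left (x : X) (ξ : H) (f : lp (fun _ : X => H) 2) :
    inner ℂ (lpSingle x ξ) f = inner ℂ ξ (lpEval x f) := by
  classical
  exact lp.inner_single_left (𝕜 := ℂ) x ξ f

/-- The `(p, q)` entry of an operator on `ℓ²(X, H)`. -/
def matEntry (p q : X) : L2Op X H →L[ℂ] (H →L[ℂ] H) :=
  ContinuousLinearMap.postcomp H (lpEval p) ∘L
    ContinuousLinearMap.precomp (lp (fun _ : X => H) 2) (lpSingle q)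

lemma matEntry_apply (p q : X) (x : L2Op X H) (ξ : H) :
    matEntry p q x ξ = x (lpSingle q ξ) p := rfl

lemma inner_matEntry (p q : X) (x : L2Op X H) (ξ η : H) :
    inner ℂ ξ (matEntry p q x η) = inner ℂ (lpSingle p ξ) (x (lpSingle q η)) :=
  (inner_lpSingle_left p ξ _).symm

lemma norm_matEntry_le (p q : X) (x : L2Op X H) : ‖matEntry p q x‖ ≤ ‖x‖ := by
  have norm_lpEval_le : ‖(lpEval p : lp (fun _ : X => H) 2 →L[ℂ] H)‖ ≤ 1 :=
    LinearMap.mkContinuous_norm_le _ zero_le_one _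
  have norm_lpSingle_le : ‖(lpSingle q : H →L[ℂ] lp (fun _ : X => H) 2)‖ ≤ 1 :=
    LinearMap.mkContinuous_norm_le _ zero_le_one _
  calc ‖matEntry p q x‖ ≤ ‖(lpEval p : lp (fun _ : X => H) 2 →L[ℂ] H)‖ *
        (‖x‖ * ‖(lpSingle q : H →L[ℂ] lp (fun _ : X => H) 2)‖) :=
        (ContinuousLinearMap.opNorm_comp_le _ _).trans <| by
          gcongr
          exact ContinuousLinearMap.opNorm_comp_le _ _
    _ ≤ 1 * (‖x‖ * 1) := by gcongr
    _ = ‖x‖ := by ring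

variable [CompleteSpace H] {ν κ : Type*} [Fintype ν] [Fintype κ]

lemma matPos_matEntry {M : Matrix ν ν (L2Op X H)} (hM : MatPos M) (g : κ → X) :
    MatPos (Matrix.of fun x y : ν × κ => matEntry (g x.2) (g y.2) (M x.1 y.1)) := by
  rw [matPos_iff_sum_inner_nonneg] at hM ⊢
  intro ξ
  refine (hM fun i => ∑ k, lpSingle (g k) (ξ (i, k))).trans_eq ?_
  simp only [Matrix.of_apply, inner_matEntry, Fintype.sum_prod_type, map_sum, sum_inner, inner_sum]
  refine Finset.sum_congr rfl fun i _ => ?_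
  rw [Finset.sum_congr rfl fun j _ => Finset.sum_comm, Finset.sum_comm]

lemma MatPos.sum_mul_mul_star {M : Matrix (ν × κ) (ν × κ) (H →L[ℂ] H)} (hM : MatPos M)
    (P : κ → (H →L[ℂ] H)) :
    MatPos (Matrix.of fun i j => ∑ p, ∑ q, P p * M (i, p) (j, q) * star (P q)) := by
  rw [matPos_iff_sum_inner_nonneg] at hM ⊢
  intro ξ
  refine (hM fun x => star (P x.2) (ξ x.1)).trans_eq ?_
  simp only [Fintype.sum_prod_type, Matrix.of_apply, _root_.sum_apply, inner_sum,
    mul_apply_eq_comp, ContinuousLinearMap.star_eq_adjoint,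
    ContinuousLinearMap.adjoint_inner_left]
  exact Finset.sum_congr rfl fun i _ => Finset.sum_comm

end L2Operators

section RegularRepresentation

variable {G H : Type*} [Group G] [NormedAddCommGroup H] [InnerProductSpace ℂ H]

lemma lam_apply (t s : G) (f : lp (fun _ : G => H) 2) : lam t f s = f (t⁻¹ * s) := rfl

lemma lam_one : (lam 1 : L2Op G H) = 1 := by
  ext f g
  simp [lam_apply]

lemma lam_mul_lam (s t : G) : (lam s * lam t : L2Op G H) = lam (s * t) := by
  ext f g
  simp [lam_apply, mul_assoc]

variable [CompleteSpace H]

lemma star_lam (t : G) : star (lam t : L2Op G H) = lam t⁻¹ := by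
  symm
  rw [ContinuousLinearMap.star_eq_adjoint, ContinuousLinearMap.eq_adjoint_iff]
  intro f g
  rw [lp.inner_eq_tsum, lp.inner_eq_tsum,
    ← (Equiv.mulLeft t).tsum_eq (fun i => inner ℂ (f i) (lam t g i))]
  simp [lam_apply]

variable {A : Type*} [NonUnitalCStarAlgebra A] (ι : A →⋆ₙₐ[ℂ] (H →L[ℂ] H)) (α : G → A ≃⋆ₐ[ℂ] A)

lemma piRep_apply (a : A) (f : lp (fun _ : G => H) 2) (s : G) :
    piRep ι α a f s = ι (α s⁻¹ a) (f s) := rfl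

/-- `piRep` as a star homomorphism. -/
def piHom : A →⋆ₙₐ[ℂ] L2Op G H where
  toFun := piRep ι α
  map_smul' := (piRepLin ι α).map_smul
  map_zero' := (piRepLin ι α).map_zero
  map_add' := (piRepLin ι α).map_add
  map_mul' a b := by
    ext f g
    simp [piRep_apply]
  map_star' a := by
    rw [ContinuousLinearMap.star_eq_adjoint, ContinuousLinearMap.eq_adjoint_iff]
    intro f g
    simp [lp.inner_eq_tsum, piRep_apply, map_star, ContinuousLinearMap.star_eq_adjoint,
      ContinuousLinearMap.adjoint_inner_left]

lemma piHom_apply (a : A) (f : lp (fun _ : G => H) 2) (s : G) :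
    piHom ι α a f s = ι (α s⁻¹ a) (f s) := rfl

lemma continuous_piHom : Continuous (piHom ι α : A → L2Op G H) :=
  AddMonoidHomClass.continuous_of_bound _ 1 fun a => by
    simpa using NonUnitalStarAlgHom.norm_apply_le (piHom ι α) a

/-- The operator `π(a)λ_t`. These operators span a dense subspace of the crossed product. -/
def crossedGen (a : A) (t : G) : L2Op G H := piHom ι α a * lam t

lemma crossedGen_apply (a : A) (t : G) (f : lp (fun _ : G => H) 2) (s : G) :
    crossedGen ι α a t f s = ι (α s⁻¹ a) (f (t⁻¹ * s)) := rfl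

lemma crossedGen_sum {κ : Type*} (s : Finset κ) (f : κ → A) (t : G) :
    crossedGen ι α (∑ k ∈ s, f k) t = ∑ k ∈ s, crossedGen ι α (f k) t := by
  simp only [crossedGen, map_sum, Finset.sum_mul]

lemma crossedGen_one_right (a : A) : crossedGen ι α a 1 = piHom ι α a := by
  rw [crossedGen, lam_one, mul_one]

lemma matEntry_crossedGen [DecidableEq G] (p q : G) (a : A) (t : G) :
    matEntry p q (crossedGen ι α a t) = if p = t * q then ι (α p⁻¹ a) else 0 := by
  ext ξ
  rw [matEntry_apply, crossedGen_apply, lpSingle_apply]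
  simp only [inv_mul_eq_iff_eq_mul]
  split_ifs <;> simp

variable {ι α}

lemma lam_mul_piHom (hα : IsAction α) (t : G) (a : A) :
    lam t * piHom ι α a = piHom ι α (α t a) * lam t := by
  ext f g
  simp [lam_apply, piHom_apply, ← hα.2]

lemma crossedGen_mul_crossedGen (hα : IsAction α) (a b : A) (s t : G) :
    crossedGen ι α a s * crossedGen ι α b t = crossedGen ι α (a * α s b) (s * t) :=
  calc piHom ι α a * lam s * (piHom ι α b * lam t)
      = piHom ι α a * (lam s * piHom ι α b) * lam t := by noncomm_ring
    _ = piHom ι α (a * α s b) * lam (s * t) := by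
      rw [lam_mul_piHom hα, map_mul, ← lam_mul_lam]
      noncomm_ring

lemma star_crossedGen (hα : IsAction α) (a : A) (t : G) :
    star (crossedGen ι α a t) = crossedGen ι α (α t⁻¹ (star a)) t⁻¹ := by
  rw [crossedGen, star_mul, star_lam, ← map_star, lam_mul_piHom hα, crossedGen]

lemma piHom_one {A : Type*} [CStarAlgebra A] {ι : A →⋆ₙₐ[ℂ] (H →L[ℂ] H)} (hι1 : ι 1 = 1)
    (α : G → A ≃⋆ₐ[ℂ] A) : piHom ι α 1 = 1 := by
  ext f g
  simp [piHom_apply, hι1]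

end RegularRepresentation

section CrossedProduct

variable {G H : Type*} [Group G] [NormedAddCommGroup H] [InnerProductSpace ℂ H] [CompleteSpace H]

section NonUnital

variable {A : Type*} [NonUnitalCStarAlgebra A] (ι : A →⋆ₙₐ[ℂ] (H →L[ℂ] H)) (α : G → A ≃⋆ₐ[ℂ] A)

/-- The reduced crossed product as a closed subspace of the operators on `ℓ²(G, H)`; its
underlying set is `CrossedSet ι α`. -/
def crossedProduct : Submodule ℂ (L2Op G H) :=
  (Submodule.span ℂ {x | ∃ (a : A) (t : G), x = crossedGen ι α a t}).topologicalClosure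

lemma crossedGen_mem (a : A) (t : G) : crossedGen ι α a t ∈ crossedProduct ι α :=
  Submodule.le_topologicalClosure _ (Submodule.subset_span ⟨a, t, rfl⟩)

lemma piHom_mem (a : A) : piHom ι α a ∈ crossedProduct ι α :=
  crossedGen_one_right ι α a ▸ crossedGen_mem ι α a 1

variable {ι α}

lemma crossedProduct_le {V : Submodule ℂ (L2Op G H)} (hV : IsClosed (V : Set (L2Op G H)))
    (hgen : ∀ a t, crossedGen ι α a t ∈ V) : crossedProduct ι α ≤ V := by
  refine Submodule.topologicalClosure_minimal _ (Submodule.span_le.2 ?_) hV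
  rintro _ ⟨a, t, rfl⟩
  exact hgen a t

lemma star_mem_crossedProduct (hα : IsAction α) {x : L2Op G H} (hx : x ∈ crossedProduct ι α) :
    star x ∈ crossedProduct ι α := by
  refine crossedProduct_le
    (V := (crossedProduct ι α).comap (starLinearEquiv ℂ (A := L2Op G H)).toLinearMap)
    ((Submodule.isClosed_topologicalClosure _).preimage continuous_star) (fun a t => ?_) hx
  change star (crossedGen ι α a t) ∈ crossedProduct ι α
  rw [star_crossedGen hα]
  exact crossedGen_mem ι α _ _

lemma matEntry_mem_range (hι : Function.Injective ι) (p q : G) {x : L2Op G H}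
    (hx : x ∈ crossedProduct ι α) : matEntry p q x ∈ LinearMap.range (iotaLin ι) := by
  classical
  have isClosed_range : IsClosed (Set.range ι) :=
    (NonUnitalStarAlgHom.isometry ι hι).isClosedEmbedding.isClosed_range
  refine crossedProduct_le
    (V := (LinearMap.range (iotaLin ι)).comap (matEntry p q : L2Op G H →L[ℂ] _).toLinearMap)
    (isClosed_range.preimage (matEntry p q).continuous) (fun a t => ?_) hx
  rw [Submodule.mem_comap, ContinuousLinearMap.coe_coe, matEntry_crossedGen]
  split_ifs
  · exact ⟨_, rfl⟩
  · exact zero_mem _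

variable (ι)

/-- The `(p, q)` entry of an operator in the crossed product, as an element of `A`. For an
operator outside the crossed product the value is arbitrary. -/
def crossedEntry {X : Type*} (p q : X) : L2Op X H →ₗ[ℂ] A :=
  (iotaLin ι).leftInverse ∘ₗ (matEntry p q : L2Op X H →L[ℂ] (H →L[ℂ] H)).toLinearMap

variable {ι}

lemma crossedEntry_eq {X : Type*} (hι : Function.Injective ι) {p q : X} {x : L2Op X H} {a : A}
    (ha : matEntry p q x = ι a) : crossedEntry ι p q x = a := by
  rw [crossedEntry, LinearMap.comp_apply, ContinuousLinearMap.coe_coe, ha]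
  exact LinearMap.leftInverse_apply_of_inj (f := iotaLin ι) (LinearMap.ker_eq_bot.2 hι) a

lemma map_crossedEntry (hι : Function.Injective ι) (p q : G) {x : L2Op G H}
    (hx : x ∈ crossedProduct ι α) : ι (crossedEntry ι p q x) = matEntry p q x := by
  obtain ⟨a, ha⟩ := matEntry_mem_range hι p q hx
  rw [crossedEntry_eq hι ha.symm]
  exact ha

lemma norm_crossedEntry_le (hι : Function.Injective ι) (p q : G) {x : L2Op G H}
    (hx : x ∈ crossedProduct ι α) : ‖crossedEntry ι p q x‖ ≤ ‖x‖ := by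
  rw [← NonUnitalStarAlgHom.norm_map ι hι, map_crossedEntry hι p q hx]
  exact norm_matEntry_le p q x

lemma crossedEntry_crossedGen [DecidableEq G] (hι : Function.Injective ι) (p q : G) (a : A)
    (t : G) :
    crossedEntry ι p q (crossedGen ι α a t) = if p = t * q then α p⁻¹ a else 0 := by
  refine crossedEntry_eq hι ?_
  rw [matEntry_crossedGen]
  split_ifs <;> simp

lemma matPos_crossedEntry {ν κ : Type*} [Fintype ν] [Fintype κ] (hι : Function.Injective ι)
    {M : Matrix ν ν (L2Op G H)} (hmem : ∀ i j, M i j ∈ crossedProduct ι α) (hM : MatPos M)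
    (g : κ → G) :
    MatPos (Matrix.of fun x y : ν × κ => crossedEntry ι (g x.2) (g y.2) (M x.1 y.1)) := by
  refine MatPos.of_map hι ?_
  have map_entries :
      (Matrix.of fun x y : ν × κ => crossedEntry ι (g x.2) (g y.2) (M x.1 y.1)).map ι =
        Matrix.of fun x y : ν × κ => matEntry (g x.2) (g y.2) (M x.1 y.1) :=
    Matrix.ext fun x y => map_crossedEntry hι _ _ (hmem _ _)
  exact map_entries ▸ matPos_matEntry hM g

end NonUnital

section Unital

variable {A : Type*} [CStarAlgebra A] {ι : A →⋆ₙₐ[ℂ] (H →L[ℂ] H)}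

lemma one_mem_crossedProduct (hι1 : ι 1 = 1) (α : G → A ≃⋆ₐ[ℂ] A) :
    (1 : L2Op G H) ∈ crossedProduct ι α :=
  piHom_one hι1 α ▸ piHom_mem ι α 1

lemma crossedEntry_one {X : Type*} [DecidableEq X] (hι : Function.Injective ι) (hι1 : ι 1 = 1)
    (p q : X) : crossedEntry ι p q 1 = if p = q then 1 else 0 := by
  refine crossedEntry_eq hι ?_
  ext ξ
  rw [matEntry_apply, one_apply_eq_self, lpSingle_apply]
  split_ifs <;> simp [hι1]

end Unital

end CrossedProduct

section CompressionToCoefficients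

variable {G H : Type*} [Group G] [NormedAddCommGroup H] [InnerProductSpace ℂ H] [CompleteSpace H]
  {A : Type*} [NonUnitalCStarAlgebra A] (ι : A →⋆ₙₐ[ℂ] (H →L[ℂ] H)) (α : G → A ≃⋆ₐ[ℂ] A)

/-- The compression of a map `Φ` on the crossed product to the coefficient algebra: embed `A`,
apply `Φ`, and take the `(1, 1)` entry. -/
def coeffCompression (Φ : L2Op G H →ₗ[ℂ] L2Op G H) : A →ₗ[ℂ] A :=
  crossedEntry ι (1 : G) 1 ∘ₗ Φ ∘ₗ piRepLin ι α

variable {ι α} {Φ : L2Op G H →ₗ[ℂ] L2Op G H}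

lemma isCompletelyPositive_coeffCompression (hι : Function.Injective ι)
    (hΦ : CPOnCrossed ι α Φ) : IsCompletelyPositive (coeffCompression ι α Φ) := by
  intro n M hM
  have pos_image : MatPos ((M.map (piHom ι α)).map Φ) :=
    hΦ.2 n _ (fun i j => piHom_mem ι α (M i j)) (hM.map (piHom ι α))
  have pos_entries := matPos_crossedEntry hι
    (fun i j => hΦ.1 _ (piHom_mem ι α (M i j))) pos_image fun _ : Unit => (1 : G)
  exact pos_entries.submatrix_equiv (Equiv.prodPUnit (Fin n)).symm

lemma norm_coeffCompression_le (hι : Function.Injective ι) (hΦ : CPOnCrossed ι α Φ)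
    (hnorm : ∀ x ∈ CrossedSet ι α, ‖Φ x‖ ≤ ‖x‖) (a : A) : ‖coeffCompression ι α Φ a‖ ≤ ‖a‖ :=
  calc ‖coeffCompression ι α Φ a‖ ≤ ‖Φ (piHom ι α a)‖ :=
        norm_crossedEntry_le hι 1 1 (hΦ.1 _ (piHom_mem ι α a))
    _ ≤ ‖piHom ι α a‖ := hnorm _ (piHom_mem ι α a)
    _ ≤ ‖a‖ := NonUnitalStarAlgHom.norm_apply_le _ a

lemma finiteDimensional_range_coeffCompression
    (hΦ : FiniteDimensional ℂ (Submodule.span ℂ ((fun x => Φ x) '' CrossedSet ι α))) :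
    FiniteDimensional ℂ (LinearMap.range (coeffCompression ι α Φ)) := by
  have range_le : LinearMap.range (coeffCompression ι α Φ) ≤
      (Submodule.span ℂ ((fun x => Φ x) '' CrossedSet ι α)).map (crossedEntry ι 1 1) := by
    rintro _ ⟨a, rfl⟩
    exact ⟨_, Submodule.subset_span ⟨_, piHom_mem ι α a, rfl⟩, rfl⟩
  exact Submodule.finiteDimensional_of_le range_le

lemma norm_coeffCompression_sub_le (hι : Function.Injective ι) (hα : IsAction α)
    (hΦ : CPOnCrossed ι α Φ) (a : A) :
    ‖coeffCompression ι α Φ a - a‖ ≤ ‖Φ (piHom ι α a) - piHom ι α a‖ := by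
  classical
  have entry_piHom : crossedEntry ι 1 1 (piHom ι α a) = a := by
    rw [← crossedGen_one_right, crossedEntry_crossedGen hι, if_pos (mul_one 1).symm, inv_one, hα.1]
  calc ‖coeffCompression ι α Φ a - a‖
      = ‖crossedEntry ι 1 1 (Φ (piHom ι α a) - piHom ι α a)‖ := by rw [map_sub, entry_piHom]; rfl
    _ ≤ _ := norm_crossedEntry_le hι 1 1
      (sub_mem (hΦ.1 _ (piHom_mem ι α a)) (piHom_mem ι α a) : _ ∈ crossedProduct ι α)

theorem nuclear_of_crossedNuclear (hι : Function.Injective ι) (hα : IsAction α)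
    (h : CrossedNuclear ι α) : NuclearCStarAlgebra A := by
  obtain ⟨I, hI, hS, Φ, cp, norm_le, finrank, lim⟩ := h
  refine ⟨I, hI, hS, fun i => coeffCompression ι α (Φ i),
    fun i => isCompletelyPositive_coeffCompression hι (cp i),
    fun i => norm_coeffCompression_le hι (cp i) (norm_le i),
    fun i => finiteDimensional_range_coeffCompression (finrank i), fun a => ?_⟩
  exact squeeze_zero (fun _ => norm_nonneg _)
    (fun i => norm_coeffCompression_sub_le hι hα (cp i) a) (lim _ (piHom_mem ι α a))

end CompressionToCoefficients

section Approximants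

lemma IsCompletelyPositive.map_one_eq_star_mul_self {R S : Type*} [Semiring R] [StarRing R]
    [Module ℂ R] [NonUnitalSemiring S] [StarRing S] [Module ℂ S] {Φ : R →ₗ[ℂ] S}
    (hΦ : IsCompletelyPositive Φ) : ∃ c, Φ 1 = star c * c := by
  obtain ⟨N, hN⟩ := hΦ 1 1 ⟨1, by simp⟩
  exact ⟨N 0 0, by simpa [Matrix.mul_apply] using congrFun (congrFun hN 0) 0⟩

lemma norm_sum_mul_mul_star_le_one {B κ : Type*} [CStarAlgebra B] {s : Finset κ} {P : κ → B}
    (hP : ∑ p ∈ s, P p * star (P p) = 1) {b : B} (hb : ∃ c, b = star c * c) (hb1 : ‖b‖ ≤ 1) :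
    ‖∑ p ∈ s, P p * b * star (P p)‖ ≤ 1 := by
  let _ : PartialOrder B := CStarAlgebra.spectralOrder B
  have _ : StarOrderedRing B := CStarAlgebra.spectralOrderedRing B
  rw [← CStarAlgebra.nonneg_iff_eq_star_mul_self] at hb
  have sum_nonneg : 0 ≤ ∑ p ∈ s, P p * b * star (P p) :=
    Finset.sum_nonneg fun p _ => star_right_conjugate_nonneg hb (P p)
  rw [CStarAlgebra.norm_le_one_iff_of_nonneg _ sum_nonneg, ← hP]
  refine Finset.sum_le_sum fun p _ => ?_
  simpa using star_right_conjugate_le_conjugate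
    ((CStarAlgebra.norm_le_one_iff_of_nonneg b hb).1 hb1) (P p)

lemma finiteDimensional_range_sum {K V W κ : Type*} [DivisionRing K] [AddCommGroup V] [Module K V]
    [AddCommGroup W] [Module K W] (s : Finset κ) (f : κ → V →ₗ[K] W)
    (hf : ∀ k ∈ s, FiniteDimensional K (LinearMap.range (f k))) :
    FiniteDimensional K (LinearMap.range (∑ k ∈ s, f k)) := by
  classical
  induction s using Finset.induction_on with
  | empty => rw [Finset.sum_empty, LinearMap.range_zero]; infer_instance
  | insert k s hk ih =>
    have := hf k (Finset.mem_insert_self k s)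
    have := ih fun j hj => hf j (Finset.mem_insert_of_mem hj)
    rw [Finset.sum_insert hk]
    exact Submodule.finiteDimensional_of_le (LinearMap.range_add_le _ _)

variable {G H : Type*} [Group G] [NormedAddCommGroup H] [InnerProductSpace ℂ H] [CompleteSpace H]

section NonUnital

variable {A : Type*} [NonUnitalCStarAlgebra A] (ι : A →⋆ₙₐ[ℂ] (H →L[ℂ] H)) (α : G → A ≃⋆ₐ[ℂ] A)

/-- The map on operators on `ℓ²(G, H)` obtained from `Φ : A → A` and a finitely supported
`T : G → A`: truncate to the entries indexed by the support of `T`, apply `Φ` to each of them, and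
reassemble the result with the row of operators `π(T p)λ_p`. -/
def crossedApprox (T : G →₀ A) (Φ : A →ₗ[ℂ] A) : L2Op G H →ₗ[ℂ] L2Op G H :=
  ∑ p ∈ T.support, ∑ q ∈ T.support,
    LinearMap.mulRight ℂ (star (crossedGen ι α (T q) q)) ∘ₗ
      LinearMap.mulLeft ℂ (crossedGen ι α (T p) p) ∘ₗ piRepLin ι α ∘ₗ Φ ∘ₗ crossedEntry ι p q

lemma crossedApprox_apply (T : G →₀ A) (Φ : A →ₗ[ℂ] A) (x : L2Op G H) :
    crossedApprox ι α T Φ x = ∑ p ∈ T.support, ∑ q ∈ T.support, crossedGen ι α (T p) p *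
      piHom ι α (Φ (crossedEntry ι p q x)) * star (crossedGen ι α (T q) q) := by
  simp only [crossedApprox, LinearMap.sum_apply, LinearMap.comp_apply, LinearMap.mulLeft_apply,
    LinearMap.mulRight_apply]
  rfl

lemma finiteDimensional_range_crossedApprox (T : G →₀ A) {Φ : A →ₗ[ℂ] A}
    (hΦ : FiniteDimensional ℂ (LinearMap.range Φ)) :
    FiniteDimensional ℂ (LinearMap.range (crossedApprox ι α T Φ)) := by
  refine finiteDimensional_range_sum _ _ fun p _ => finiteDimensional_range_sum _ _ fun q _ => ?_
  rw [← LinearMap.comp_assoc, ← LinearMap.comp_assoc, LinearMap.range_comp]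
  have := Submodule.finiteDimensional_of_le (LinearMap.range_comp_le_range (crossedEntry ι p q) Φ)
  infer_instance

variable {ι α}

lemma crossedGen_mul_piHom_mul_star_crossedGen (hα : IsAction α) (a b c : A) (p q : G) :
    crossedGen ι α a p * piHom ι α b * star (crossedGen ι α c q) =
      crossedGen ι α (a * α p b * α (p * q⁻¹) (star c)) (p * q⁻¹) := by
  rw [← crossedGen_one_right, crossedGen_mul_crossedGen hα, star_crossedGen hα,
    crossedGen_mul_crossedGen hα, mul_one, hα.2 p q⁻¹]

lemma crossedApprox_mem (hα : IsAction α) (T : G →₀ A) (Φ : A →ₗ[ℂ] A) (x : L2Op G H) :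
    crossedApprox ι α T Φ x ∈ crossedProduct ι α := by
  rw [crossedApprox_apply]
  refine Submodule.sum_mem _ fun p _ => Submodule.sum_mem _ fun q _ => ?_
  rw [crossedGen_mul_piHom_mul_star_crossedGen hα]
  exact crossedGen_mem ι α _ _

lemma cpOnCrossed_crossedApprox (hι : Function.Injective ι) (hα : IsAction α) (T : G →₀ A)
    {Φ : A →ₗ[ℂ] A} (hΦ : IsCompletelyPositive Φ) : CPOnCrossed ι α (crossedApprox ι α T Φ) := by
  refine ⟨fun x _ => crossedApprox_mem hα T Φ x, fun n M hmem hM => ?_⟩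
  have pos_entries := matPos_crossedEntry hι hmem hM fun p : T.support => (p : G)
  have pos_sum := ((hΦ.matPos_map pos_entries).map (piHom ι α)).sum_mul_mul_star
    fun p => crossedGen ι α (T p) (p : G)
  convert pos_sum using 1
  ext1 i j
  simp only [Matrix.map_apply, Matrix.of_apply, crossedApprox_apply]
  rw [← Finset.sum_coe_sort]
  exact Finset.sum_congr rfl fun p _ => (Finset.sum_coe_sort _ _).symm

end NonUnital

section Unital

variable {A : Type*} [CStarAlgebra A]

/-- A finitely supported function from `X` to the self-adjoint part of the centre of `A` which is
normalised in `ℓ²(X, A)`. -/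
structure IsCentralUnitVector {X : Type*} (T : X →₀ A) : Prop where
  star_apply (s : X) : star (T s) = T s
  commute (s : X) (c : A) : Commute (T s) c
  finsum_mul_self : ∑ᶠ s, T s * T s = 1

lemma IsCentralUnitVector.sum_mul_self {X : Type*} {T : X →₀ A}
    (hT : IsCentralUnitVector T) : ∑ s ∈ T.support, T s * T s = 1 := by
  rw [← hT.finsum_mul_self]
  refine (finsum_eq_sum_of_support_subset _ fun s hs => ?_).symm
  simpa using left_ne_zero_of_mul hs

variable {ι : A →⋆ₙₐ[ℂ] (H →L[ℂ] H)} {α : G → A ≃⋆ₐ[ℂ] A} {T : G →₀ A} {Φ : A →ₗ[ℂ] A}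

lemma crossedApprox_one (hι : Function.Injective ι) (hι1 : ι 1 = 1) :
    crossedApprox ι α T Φ 1 = ∑ p ∈ T.support, crossedGen ι α (T p) p * piHom ι α (Φ 1) *
      star (crossedGen ι α (T p) p) := by
  classical
  rw [crossedApprox_apply]
  refine Finset.sum_congr rfl fun p hp => ?_
  rw [Finset.sum_eq_single_of_mem p hp fun q _ hqp => ?_, crossedEntry_one hι hι1, if_pos rfl]
  rw [crossedEntry_one hι hι1, if_neg hqp.symm]
  simp

lemma IsCentralUnitVector.sum_crossedGen_mul_star (hT : IsCentralUnitVector T) (hα : IsAction α)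
    (hι1 : ι 1 = 1) :
    ∑ p ∈ T.support, crossedGen ι α (T p) p * star (crossedGen ι α (T p) p) = 1 :=
  calc ∑ p ∈ T.support, crossedGen ι α (T p) p * star (crossedGen ι α (T p) p)
      = ∑ p ∈ T.support, piHom ι α (T p * T p) := by
        refine Finset.sum_congr rfl fun p _ => ?_
        rw [star_crossedGen hα, crossedGen_mul_crossedGen hα, ← hα.2, mul_inv_cancel, hα.1,
          hT.star_apply, crossedGen_one_right]
    _ = 1 := by rw [← map_sum, hT.sum_mul_self, piHom_one hι1]

lemma norm_crossedApprox_le (hι : Function.Injective ι) (hι1 : ι 1 = 1) (hα : IsAction α)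
    (hT : IsCentralUnitVector T) (hΦ : IsCompletelyPositive Φ) (hΦ1 : ‖Φ 1‖ ≤ 1) {x : L2Op G H}
    (hx : x ∈ crossedProduct ι α) : ‖crossedApprox ι α T Φ x‖ ≤ ‖x‖ := by
  refine norm_map_le_of_matPos_map (one_mem_crossedProduct hι1 α)
    (fun _ => star_mem_crossedProduct hα) ((cpOnCrossed_crossedApprox hι hα T hΦ).2 2) ?_ hx
  obtain ⟨c, hc⟩ := hΦ.map_one_eq_star_mul_self
  rw [crossedApprox_one hι hι1]
  refine norm_sum_mul_mul_star_le_one (hT.sum_crossedGen_mul_star hα hι1)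
    ⟨piHom ι α c, by rw [hc, map_mul, map_star]⟩ ?_
  exact (NonUnitalStarAlgHom.norm_apply_le _ _).trans hΦ1

end Unital

end Approximants

section Convergence

open Filter Topology

lemma tendsto_of_mem_topologicalClosure_span {𝕜 E I : Type*} [NormedField 𝕜]
    [NormedAddCommGroup E] [NormedSpace 𝕜 E] {l : Filter I} {Θ : I → E →ₗ[𝕜] E} {s : Set E}
    (hΘ : ∀ i, ∀ x ∈ (Submodule.span 𝕜 s).topologicalClosure, ‖Θ i x‖ ≤ ‖x‖)
    (hs : ∀ x ∈ s, Tendsto (fun i => Θ i x) l (𝓝 x)) {x : E}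
    (hx : x ∈ (Submodule.span 𝕜 s).topologicalClosure) : Tendsto (fun i => Θ i x) l (𝓝 x) := by
  have tendsto_span : ∀ y ∈ Submodule.span 𝕜 s, Tendsto (fun i => Θ i y) l (𝓝 y) := by
    intro y hy
    induction hy using Submodule.span_induction with
    | mem y hy => exact hs y hy
    | zero => simpa using tendsto_const_nhds
    | add y z _ _ hy hz => simpa using hy.add hz
    | smul c y _ hy => simpa using hy.const_smul c
  rw [Metric.tendsto_nhds]
  intro ε hε
  obtain ⟨y, hy, hxy⟩ := Metric.mem_closure_iff.1 hx (ε / 3) (by positivity)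
  filter_upwards [Metric.tendsto_nhds.1 (tendsto_span y hy) (ε / 3) (by positivity)] with i hi
  have dist_map_le : dist (Θ i x) (Θ i y) ≤ dist x y := by
    rw [dist_eq_norm, dist_eq_norm, ← map_sub]
    exact hΘ i _ (sub_mem hx (Submodule.le_topologicalClosure _ hy))
  calc dist (Θ i x) x ≤ dist (Θ i x) (Θ i y) + dist (Θ i y) y + dist y x := dist_triangle4 _ _ _ _
    _ < ε := by rw [dist_comm y x]; linarith

/-- Kelley's theorem on iterated limits. -/
lemma tendsto_apply_of_iterated_tendsto {I J E : Type*} [Nonempty I] [SemilatticeSup I]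
    [Nonempty J] [SemilatticeSup J] [PseudoMetricSpace E] {u : I → J → E} {v : J → E} {x : E}
    (huv : ∀ j, Tendsto (fun i => u i j) atTop (𝓝 (v j))) (hvx : Tendsto v atTop (𝓝 x)) :
    Tendsto (fun k : J × (J → I) => u (k.2 k.1) k.1) atTop (𝓝 x) := by
  rw [Metric.tendsto_atTop] at hvx ⊢
  intro ε hε
  obtain ⟨j₀, hj₀⟩ := hvx (ε / 2) (by positivity)
  choose i₀ hi₀ using fun j => Metric.tendsto_atTop.1 (huv j) (ε / 2) (by positivity)
  refine ⟨(j₀, i₀), fun k hk => ?_⟩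
  calc dist (u (k.2 k.1) k.1) x ≤ dist (u (k.2 k.1) k.1) (v k.1) + dist (v k.1) x :=
        dist_triangle _ _ _
    _ < ε / 2 + ε / 2 := add_lt_add (hi₀ _ _ (hk.2 _)) (hj₀ _ hk.1)
    _ = ε := by ring

variable {G : Type*} [Group G]

section Autocorrelation

variable {A : Type*} [CStarAlgebra A]

/-- The inner product `∑_q T(tq) α_t(T(q))` of `T` with its translate by `t`. -/
def autocorrelation (α : G → A ≃⋆ₐ[ℂ] A) (T : G →₀ A) (t : G) : A :=
  ∑ q ∈ T.support, T (t * q) * α t (T q)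

variable {α : G → A ≃⋆ₐ[ℂ] A}

lemma autocorrelation_eq_finsum (T : G →₀ A) (t : G) :
    autocorrelation α T t = ∑ᶠ q, T (t * q) * α t (T q) := by
  refine (finsum_eq_sum_of_support_subset _ fun q hq => ?_).symm
  have := right_ne_zero_of_mul hq
  simp_all

/-- Expanding the square, both quadratic terms sum to `1`. -/
lemma IsCentralUnitVector.finsum_star_mul_self_sub_translate {T : G →₀ A}
    (hT : IsCentralUnitVector T) (t : G) :
    ∑ᶠ s, star (T s - α t (T (t⁻¹ * s))) * (T s - α t (T (t⁻¹ * s))) =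
      (2 : ℂ) • (1 - autocorrelation α T t) := by
  have finite_support_mul (f : G → A) : (fun q => f q * α t (T q)).HasFiniteSupport :=
    T.hasFiniteSupport.subset fun q hq hTq => hq (by simp [hTq])
  have finite_support_translate : (fun q => T (t * q) * T (t * q)).HasFiniteSupport :=
    (T.hasFiniteSupport.preimage (mul_right_injective t).injOn).subset fun _ hq =>
      left_ne_zero_of_mul hq
  have sum_translate : ∑ᶠ q, T (t * q) * T (t * q) = 1 :=
    (finsum_comp_equiv (Equiv.mulLeft t) (f := fun s => T s * T s)).trans hT.finsum_mul_self
  have sum_image : ∑ᶠ q, α t (T q) * α t (T q) = 1 := by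
    have map_sum_eq := (α t : A →+ A).map_finsum
      (T.hasFiniteSupport.subset fun _ hs => left_ne_zero_of_mul hs :
        (fun s => T s * T s).HasFiniteSupport)
    simpa [hT.finsum_mul_self] using map_sum_eq.symm
  have expand (q : G) : star (T (t * q) - α t (T q)) * (T (t * q) - α t (T q)) =
      T (t * q) * T (t * q) + α t (T q) * α t (T q) - (2 : ℂ) • (T (t * q) * α t (T q)) := by
    rw [star_sub, hT.star_apply, ← map_star, hT.star_apply, sub_mul, mul_sub, mul_sub, two_smul,
      (hT.commute (t * q) (α t (T q))).eq]
    abel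
  calc ∑ᶠ s, star (T s - α t (T (t⁻¹ * s))) * (T s - α t (T (t⁻¹ * s)))
      = ∑ᶠ q, star (T (t * q) - α t (T q)) * (T (t * q) - α t (T q)) := by
        rw [← finsum_comp_equiv (Equiv.mulLeft t)]
        simp
    _ = ∑ᶠ q, T (t * q) * T (t * q) + ∑ᶠ q, α t (T q) * α t (T q) -
          (2 : ℂ) • ∑ᶠ q, T (t * q) * α t (T q) := by
        simp_rw [expand]
        rw [finsum_sub_distrib, smul_finsum,
          finsum_add_distrib finite_support_translate (finite_support_mul _)]
        · exact finite_support_translate.add (finite_support_mul _)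
        · simpa only [smul_mul_assoc] using finite_support_mul fun q => (2 : ℂ) • T (t * q)
    _ = (2 : ℂ) • (1 - autocorrelation α T t) := by
        rw [sum_translate, sum_image, autocorrelation_eq_finsum, smul_sub, two_smul ℂ (1 : A)]

lemma AmenableAction.exists_tendsto_autocorrelation (hα : AmenableAction α) :
    ∃ (J : Type) (_ : Nonempty J) (_ : SemilatticeSup J) (T : J → G →₀ A),
      (∀ j, IsCentralUnitVector (T j)) ∧
        ∀ t, Tendsto (fun j => autocorrelation α (T j) t) atTop (𝓝 1) := by
  obtain ⟨J, hJ, hS, T, finite_supp, commute, pos, sum_eq, lim⟩ := hα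
  have star_apply (j : J) (s : G) : star (T j s) = T j s := by
    obtain ⟨b, hb⟩ := pos j s
    rw [hb, star_mul, star_star]
  have isUnit (j : J) : IsCentralUnitVector (Finsupp.ofSupportFinite (T j) (finite_supp j)) :=
    ⟨star_apply j, commute j, sum_eq j⟩
  refine ⟨J, hJ, hS, _, isUnit, fun t => ?_⟩
  have lim_two : Tendsto (fun j => (2 : ℂ) • (1 - autocorrelation α
      (Finsupp.ofSupportFinite (T j) (finite_supp j)) t)) atTop (𝓝 0) := by
    refine (tendsto_zero_iff_norm_tendsto_zero.2 (lim t)).congr fun j => ?_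
    exact (isUnit j).finsum_star_mul_self_sub_translate t
  have lim_sub := (lim_two.const_smul (2⁻¹ : ℂ)).const_sub (1 : A)
  simpa [smul_smul] using lim_sub

end Autocorrelation

variable {H : Type*} [NormedAddCommGroup H] [InnerProductSpace ℂ H] [CompleteSpace H]

lemma tendsto_crossedApprox {A I : Type*} [NonUnitalCStarAlgebra A] (ι : A →⋆ₙₐ[ℂ] (H →L[ℂ] H))
    (α : G → A ≃⋆ₐ[ℂ] A) (T : G →₀ A) {l : Filter I} {Φ : I → A →ₗ[ℂ] A} {Ψ : A →ₗ[ℂ] A}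
    (hΦ : ∀ a, Tendsto (fun i => Φ i a) l (𝓝 (Ψ a))) (x : L2Op G H) :
    Tendsto (fun i => crossedApprox ι α T (Φ i) x) l (𝓝 (crossedApprox ι α T Ψ x)) := by
  simp only [crossedApprox_apply]
  refine tendsto_finsetSum _ fun p _ => tendsto_finsetSum _ fun q _ => ?_
  exact (((continuous_piHom ι α).tendsto _).comp (hΦ _)).const_mul _ |>.mul_const _

variable {A : Type*} [CStarAlgebra A] {ι : A →⋆ₙₐ[ℂ] (H →L[ℂ] H)} {α : G → A ≃⋆ₐ[ℂ] A}

lemma crossedApprox_id_crossedGen (hι : Function.Injective ι) (hα : IsAction α) {T : G →₀ A}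
    (hT : IsCentralUnitVector T) (a : A) (t : G) :
    crossedApprox ι α T LinearMap.id (crossedGen ι α a t) =
      crossedGen ι α (a * autocorrelation α T t) t := by
  classical
  have diagonal_term (q : G) : crossedGen ι α (T (t * q)) (t * q) * piHom ι α (α (t * q)⁻¹ a) *
      star (crossedGen ι α (T q) q) = crossedGen ι α (a * (T (t * q) * α t (T q))) t := by
    rw [crossedGen_mul_piHom_mul_star_crossedGen hα, ← hα.2, mul_inv_cancel, hα.1,
      mul_inv_cancel_right, hT.star_apply, (hT.commute (t * q) a).eq, mul_assoc]
  rw [crossedApprox_apply, Finset.sum_comm, autocorrelation, Finset.mul_sum, crossedGen_sum]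
  refine Finset.sum_congr rfl fun q _ => ?_
  rw [Finset.sum_eq_single (t * q)]
  · rw [crossedEntry_crossedGen hι, if_pos rfl, LinearMap.id_apply]
    exact diagonal_term q
  · intro p _ hp
    rw [crossedEntry_crossedGen hι, if_neg hp]
    simp
  · intro htq
    rw [Finsupp.notMem_support_iff.1 htq]
    simp [crossedGen]

lemma tendsto_crossedApprox_id_crossedGen {J : Type*} {l : Filter J} (hι : Function.Injective ι)
    (hα : IsAction α) {T : J → G →₀ A} (hT : ∀ j, IsCentralUnitVector (T j)) {t : G}
    (hlim : Tendsto (fun j => autocorrelation α (T j) t) l (𝓝 1)) (a : A) :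
    Tendsto (fun j => crossedApprox ι α (T j) LinearMap.id (crossedGen ι α a t)) l
      (𝓝 (crossedGen ι α a t)) := by
  simp_rw [fun j => crossedApprox_id_crossedGen hι hα (hT j)]
  have lim_mul : Tendsto (fun j => a * autocorrelation α (T j) t) l (𝓝 a) := by
    simpa using hlim.const_mul a
  exact (((continuous_piHom ι α).tendsto a).comp lim_mul).mul_const (lam t)

theorem crossedNuclear_of_nuclear (hι : Function.Injective ι) (hι1 : ι 1 = 1) (hα : IsAction α)
    (hamen : AmenableAction α) (hA : NuclearCStarAlgebra A) : CrossedNuclear ι α := by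
  obtain ⟨I, hI, hSI, Φ, cp, norm_le, finrank, limΦ⟩ := hA
  obtain ⟨J, hJ, hSJ, T, isUnit, limT⟩ := hamen.exists_tendsto_autocorrelation
  have norm_one_le : ‖(1 : A)‖ ≤ 1 := by
    nontriviality A
    exact CStarRing.norm_one.le
  have approx_norm_le (k : J × (J → I)) {x : L2Op G H} (hx : x ∈ crossedProduct ι α) :
      ‖crossedApprox ι α (T k.1) (Φ (k.2 k.1)) x‖ ≤ ‖x‖ :=
    norm_crossedApprox_le hι hι1 hα (isUnit k.1) (cp _) ((norm_le _ 1).trans norm_one_le) hx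
  refine ⟨J × (J → I), inferInstance, inferInstance,
    fun k => crossedApprox ι α (T k.1) (Φ (k.2 k.1)),
    fun k => cpOnCrossed_crossedApprox hι hα _ (cp _), fun k x hx => approx_norm_le k hx,
    fun k => ?_, fun x hx => tendsto_iff_norm_sub_tendsto_zero.1 ?_⟩
  · have := finiteDimensional_range_crossedApprox ι α (T k.1) (finrank (k.2 k.1))
    exact Submodule.finiteDimensional_of_le
      (Submodule.span_le.2 (Set.image_subset_range _ _) : _ ≤ LinearMap.range _)
  · refine tendsto_of_mem_topologicalClosure_span (fun k _ => approx_norm_le k) ?_ hx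
    rintro _ ⟨a, t, rfl⟩
    exact tendsto_apply_of_iterated_tendsto
      (fun j => tendsto_crossedApprox ι α (T j) (Ψ := LinearMap.id)
        (fun b => tendsto_iff_norm_sub_tendsto_zero.2 (limΦ b)) (crossedGen ι α a t))
      (tendsto_crossedApprox_id_crossedGen hι hα isUnit (limT t) a)

end Convergence

/-- **Corollary 4.5.** Let `G` be a discrete group acting amenably by `α` on a unital
C*-algebra `A`.  Then `A ⋊_{α,r} G` is nuclear if and only if `A` is nuclear. -/
theorem crossedNuclear_iff_nuclear_of_amenable
    {H : Type*} [NormedAddCommGroup H] [InnerProductSpace ℂ H] [CompleteSpace H]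
    {A : Type*} [CStarAlgebra A] {G : Type*} [Group G]
    (ι : A →⋆ₙₐ[ℂ] (H →L[ℂ] H)) (hisom : ∀ a : A, ‖ι a‖ = ‖a‖)
    (hnd : NondegenerateRep ι) (hι1 : ι 1 = 1)
    (α : G → A ≃⋆ₐ[ℂ] A) (hα : IsAction α)
    (hamen : AmenableAction α) :
    CrossedNuclear ι α ↔ NuclearCStarAlgebra A := by
  have hι : Function.Injective ι := (AddMonoidHomClass.isometry_of_norm ι hisom).injective
  exact ⟨nuclear_of_crossedNuclear hι hα, crossedNuclear_of_nuclear hι hι1 hα hamen⟩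

end
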